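/- Let K⁺, K⁻ : ℕ → ℕ → ℝ be nonnegative symmetric kernels, K̂ a nonnegative symmetric majorant kernel with K̂ ≥ max{K⁺, K⁻} pointwise, and μ⊕, μ⊙, μ⊖ : ℕ → ℝ nonnegative finitely supported functions. Set K_S⁰ := min{K⁺, K⁻}, Δ_S⁺ := max{K⁺ − K⁻, 0}, Δ_S⁻ := max{K⁻ − K⁺, 0}; T₊(y) := Σ_x K̂(x,y)μ⊕(x), T₋(y) := Σ_z K̂(y,z)μ⊖(z); r⁻(x,y,z) := K̂(x,y)K⁻(y,z)/T₊(y), r⁺(x,y,z) := K̂(y,z)K⁺(x,y)/T₋(y); K_D⁰ := min{r⁻, r⁺}, Δ_D⁺ := max{r⁺ − r⁻, 0}, Δ_D⁻ := max{r⁻ − r⁺, 0}. Assume T₊(y) > 0 and T₋(y) > 0 for every y in the support of μ⊙. Then for every h : ℕ → ℝ the following identity holds: [ (1/2)Σ_{x,y≥1}(h(x+y) − h(x) − h(y))K_S⁰(x,y)μ⊙(x)μ⊙(y) − Σ_{x,y≥1} h(x)(Δ_S⁺ + Δ_S⁻)(x,y)μ⊙(x)μ⊙(y) − Σ_{x,y,z≥1}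 h(y)(K_D⁰ + Δ_D⁺ + Δ_D⁻)(x,y,z)μ⊕(x)μ⊙(y)μ⊖(z) ] + [ (1/2)Σ_{x,y≥1} h(x+y)Δ_S⁻(x,y)μ⊙(x)μ⊙(y) + Σ_{x,y≥1} h(x)Δ_S⁺(x,y)μ⊙(x)μ⊙(y) + Σ_{x,y,z≥1}(h(y+z) − h(z))(K_D⁰ + Δ_D⁻)(x,y,z)μ⊕(x)μ⊙(y)μ⊖(z) + Σ_{x,y,z≥1} h(y)Δ_D⁺(x,y,z)μ⊕(x)μ⊙(y)μ⊖(z) + (1/2)Σ_{y,z≥1}(h(y+z) − h(y) − h(z))K⁻(y,z)μ⊖(y)μ⊖(z) ] = (1/2)Σ_{x,y≥1}(h(x+y) − h(x) − h(y))K⁻(x,y)(μ⊙ + μ⊖)(x)(μ⊙ + μ⊖)(y). Consequently, if (μ_t^⊕, μ_t^⊙, μ_t^⊖) solves the coupled limit system of differential equations for all test functions, then μ_t^− := μ_t^⊙ + μ_t^⊖ satisfies Smoluchowski's coagulation equation with kernel K⁻. -/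

import Mathlib

theorem conv1 (S : Set ℕ) (A : Finset ℕ) (hA : ∀ x ∈ A, x ∈ S) (f : ℕ → ℝ)
    (hf : ∀ x ∈ S, x ∉ A → f x = 0) : ∑ᶠ x ∈ S, f x = ∑ x ∈ A, f x := by
  apply finsum_mem_eq_sum_of_inter_support_eq
  ext x
  simp only [Set.mem_inter_iff, Function.mem_support, Finset.mem_coe]
  constructor
  · rintro ⟨h1, h2⟩
    exact ⟨by by_contra h3; exact h2 (hf x h1 h3), h2⟩
  · rintro ⟨h1, h2⟩
    exact ⟨hA x h1, h2⟩

theorem conv2 (S : Set ℕ) (A : Finset ℕ) (hA : ∀ x ∈ A, x ∈ S) (f : ℕ → ℕ → ℝ)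
    (hf : ∀ x ∈ S, ∀ y ∈ S, (x ∉ A ∨ y ∉ A) → f x y = 0) :
    ∑ᶠ x ∈ S, ∑ᶠ y ∈ S, f x y = ∑ x ∈ A, ∑ y ∈ A, f x y := by
  rw [conv1 S A hA]
  · exact Finset.sum_congr rfl fun x hx =>
      conv1 S A hA _ fun y hy h => hf x (hA x hx) y hy (Or.inr h)
  · intro x hx h
    rw [conv1 S A hA _ fun y hy h => hf x hx y hy (Or.inr h)]
    exact Finset.sum_eq_zero fun y hy => hf x hx y (hA y hy) (Or.inl h)

theorem conv3 (S : Set ℕ) (A : Finset ℕ) (hA : ∀ x ∈ A, x ∈ S) (f : ℕ → ℕ → ℕ → ℝ)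
    (hf : ∀ x ∈ S, ∀ y ∈ S, ∀ z ∈ S, (x ∉ A ∨ y ∉ A ∨ z ∉ A) → f x y z = 0) :
    ∑ᶠ x ∈ S, ∑ᶠ y ∈ S, ∑ᶠ z ∈ S, f x y z = ∑ x ∈ A, ∑ y ∈ A, ∑ z ∈ A, f x y z := by
  rw [conv1 S A hA]
  · exact Finset.sum_congr rfl fun x hx =>
      conv2 S A hA _ fun y hy z hz h => hf x (hA x hx) y hy z hz (Or.inr h)
  · intro x hx h
    rw [conv2 S A hA _ fun y hy z hz h => hf x hx y hy z hz (Or.inr h)]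
    exact Finset.sum_eq_zero fun y hy => Finset.sum_eq_zero fun z hz =>
      hf x hx y (hA y hy) z (hA z hz) (Or.inl h)

/-- The sum of the right-hand sides of the coupled limit equations for `μ⊙` and `μ⊖`
equals the right-hand side of Smoluchowski's equation with kernel `K⁻` evaluated at the
marginal `μ⁻ = μ⊙ + μ⊖`.  Consequently, if `(μ_t^⊕, μ_t^⊙, μ_t^⊖)` solves the coupled
limit system, then `μ_t^− = μ_t^⊙ + μ_t^⊖` satisfies Smoluchowski's coagulation equation
with kernel `K⁻`. -/
theorem coupled_limit_minus_marginal_smoluchowski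
    (Kp Km Khat : ℕ → ℕ → ℝ)
    (hKp : ∀ x y, 0 ≤ Kp x y) (hKm : ∀ x y, 0 ≤ Km x y)
    (hKpSymm : ∀ x y, Kp x y = Kp y x) (hKmSymm : ∀ x y, Km x y = Km y x)
    (hKhat : ∀ x y, 0 ≤ Khat x y) (hKhatSymm : ∀ x y, Khat x y = Khat y x)
    (hMaj : ∀ x y, max (Kp x y) (Km x y) ≤ Khat x y)
    (μp μo μm : ℕ → ℝ)
    (hμp : ∀ x, 0 ≤ μp x) (hμo : ∀ x, 0 ≤ μo x) (hμm : ∀ x, 0 ≤ μm x)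
    (hμpFin : (Function.support μp).Finite) (hμoFin : (Function.support μo).Finite)
    (hμmFin : (Function.support μm).Finite) :
    let S : Set ℕ := {n : ℕ | 1 ≤ n}
    let KS0 : ℕ → ℕ → ℝ := fun x y => min (Kp x y) (Km x y)
    let ΔSp : ℕ → ℕ → ℝ := fun x y => max (Kp x y - Km x y) 0
    let ΔSm : ℕ → ℕ → ℝ := fun x y => max (Km x y - Kp x y) 0
    let Tp : ℕ → ℝ := fun y => ∑ᶠ x ∈ S, Khat x y * μp x
    let Tm : ℕ → ℝ := fun y => ∑ᶠ z ∈ S, Khat y z * μm z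
    let rm : ℕ → ℕ → ℕ → ℝ := fun x y z => Khat x y * Km y z / Tp y
    let rp : ℕ → ℕ → ℕ → ℝ := fun x y z => Khat y z * Kp x y / Tm y
    let KD0 : ℕ → ℕ → ℕ → ℝ := fun x y z => min (rm x y z) (rp x y z)
    let ΔDp : ℕ → ℕ → ℕ → ℝ := fun x y z => max (rp x y z - rm x y z) 0
    let ΔDm : ℕ → ℕ → ℕ → ℝ := fun x y z => max (rm x y z - rp x y z) 0
    (∀ y ∈ Function.support μo, 0 < Tp y ∧ 0 < Tm y) →
    ∀ h : ℕ → ℝ,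
      (((1 : ℝ) / 2) * ∑ᶠ x ∈ S, ∑ᶠ y ∈ S,
            (h (x + y) - h x - h y) * KS0 x y * μo x * μo y
        - (∑ᶠ x ∈ S, ∑ᶠ y ∈ S, h x * (ΔSp x y + ΔSm x y) * μo x * μo y)
        - (∑ᶠ x ∈ S, ∑ᶠ y ∈ S, ∑ᶠ z ∈ S,
            h y * (KD0 x y z + ΔDp x y z + ΔDm x y z) * μp x * μo y * μm z))
      +
      (((1 : ℝ) / 2) * ∑ᶠ x ∈ S, ∑ᶠ y ∈ S, h (x + y) * ΔSm x y * μo x * μo y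
        + (∑ᶠ x ∈ S, ∑ᶠ y ∈ S, h x * ΔSp x y * μo x * μo y)
        + (∑ᶠ x ∈ S, ∑ᶠ y ∈ S, ∑ᶠ z ∈ S,
            (h (y + z) - h z) * (KD0 x y z + ΔDm x y z) * μp x * μo y * μm z)
        + (∑ᶠ x ∈ S, ∑ᶠ y ∈ S, ∑ᶠ z ∈ S,
            h y * ΔDp x y z * μp x * μo y * μm z)
        + ((1 : ℝ) / 2) * ∑ᶠ y ∈ S, ∑ᶠ z ∈ S,
            (h (y + z) - h y - h z) * Km y z * μm y * μm z)
      =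
      ((1 : ℝ) / 2) * ∑ᶠ x ∈ S, ∑ᶠ y ∈ S,
          (h (x + y) - h x - h y) * Km x y * (μo x + μm x) * (μo y + μm y) := by
  intro S KS0 ΔSp ΔSm Tp Tm rm rp KD0 ΔDp ΔDm hT h
  obtain ⟨A, hA, hp, ho, hm⟩ : ∃ A : Finset ℕ, (∀ x ∈ A, x ∈ S) ∧
      (∀ x ∈ S, x ∉ A → μp x = 0) ∧ (∀ x ∈ S, x ∉ A → μo x = 0) ∧
      (∀ x ∈ S, x ∉ A → μm x = 0) := by
    refine ⟨(hμpFin.toFinset ∪ hμoFin.toFinset ∪ hμmFin.toFinset).filter (fun n => 1 ≤ n),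
      ?_, ?_, ?_, ?_⟩
    · intro x hx
      exact (Finset.mem_filter.1 hx).2
    all_goals
      intro x hx hn
      by_contra h0
      apply hn
      simp only [Finset.mem_filter, Finset.mem_union, Set.Finite.mem_toFinset,
        Function.mem_support]
      exact ⟨by tauto, hx⟩
  have hTp : ∀ y, Tp y = ∑ x ∈ A, Khat x y * μp x := fun y =>
    conv1 S A hA _ fun x hx hn => by rw [hp x hx hn, mul_zero]
  have c2 : ∀ (F : ℕ → ℕ → ℝ) (u v : ℕ → ℝ), (∀ x ∈ S, x ∉ A → u x = 0) →
      (∀ x ∈ S, x ∉ A → v x = 0) →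
      ∑ᶠ x ∈ S, ∑ᶠ y ∈ S, F x y * u x * v y = ∑ x ∈ A, ∑ y ∈ A, F x y * u x * v y := by
    intro F u v hu hv
    apply conv2 S A hA
    rintro x hx y hy (hn | hn)
    · rw [hu x hx hn]; ring
    · rw [hv y hy hn]; ring
  have c3 : ∀ (F : ℕ → ℕ → ℕ → ℝ),
      ∑ᶠ x ∈ S, ∑ᶠ y ∈ S, ∑ᶠ z ∈ S, F x y z * μp x * μo y * μm z
        = ∑ x ∈ A, ∑ y ∈ A, ∑ z ∈ A, F x y z * μp x * μo y * μm z := by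
    intro F
    apply conv3 S A hA
    rintro x hx y hy z hz (hn | hn | hn)
    · rw [hp x hx hn]; ring
    · rw [ho y hy hn]; ring
    · rw [hm z hz hn]; ring
  rw [c2 (fun x y => (h (x + y) - h x - h y) * KS0 x y) μo μo ho ho,
    c2 (fun x y => h x * (ΔSp x y + ΔSm x y)) μo μo ho ho,
    c2 (fun x y => h (x + y) * ΔSm x y) μo μo ho ho,
    c2 (fun x y => h x * ΔSp x y) μo μo ho ho,
    c2 (fun x y => (h (x + y) - h x - h y) * Km x y) μm μm hm hm,
    c2 (fun x y => (h (x + y) - h x - h y) * Km x y) (fun x => μo x + μm x)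
      (fun x => μo x + μm x) (fun x hx hn => by simp [ho x hx hn, hm x hx hn])
      (fun x hx hn => by simp [ho x hx hn, hm x hx hn]),
    c3 (fun x y z => h y * (KD0 x y z + ΔDp x y z + ΔDm x y z)),
    c3 (fun x y z => (h (y + z) - h z) * (KD0 x y z + ΔDm x y z)),
    c3 (fun x y z => h y * ΔDp x y z)]
  have hS : ∀ x y, KS0 x y = Km x y - ΔSm x y := by
    intro x y
    simp only [KS0, ΔSm]
    rcases le_total (Kp x y) (Km x y) with h1 | h1
    · rw [min_eq_left h1, max_eq_left (by linarith)]; ring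
    · rw [min_eq_right h1, max_eq_right (by linarith)]; ring
  have hD : ∀ x y z, KD0 x y z = rm x y z - ΔDm x y z := by
    intro x y z
    simp only [KD0, ΔDm]
    rcases le_total (rm x y z) (rp x y z) with h1 | h1
    · rw [min_eq_left h1, max_eq_right (by linarith)]; ring
    · rw [min_eq_right h1, max_eq_left (by linarith)]; ring
  have hsymm : ∀ x y, ΔSm x y = ΔSm y x := by
    intro x y
    simp only [ΔSm]
    rw [hKpSymm x y, hKmSymm x y]
  -- the triple sums combine into a double sum
  have hDsum : (∑ x ∈ A, ∑ y ∈ A, ∑ z ∈ A,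
        (h (y + z) - h z) * (KD0 x y z + ΔDm x y z) * μp x * μo y * μm z)
      + (∑ x ∈ A, ∑ y ∈ A, ∑ z ∈ A, h y * ΔDp x y z * μp x * μo y * μm z)
      - (∑ x ∈ A, ∑ y ∈ A, ∑ z ∈ A,
        h y * (KD0 x y z + ΔDp x y z + ΔDm x y z) * μp x * μo y * μm z)
      = ∑ y ∈ A, ∑ z ∈ A, (h (y + z) - h y - h z) * Km y z * μo y * μm z := by
    simp only [← Finset.sum_add_distrib, ← Finset.sum_sub_distrib]
    rw [Finset.sum_comm]
    refine Finset.sum_congr rfl fun y hy => ?_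
    rw [Finset.sum_comm]
    refine Finset.sum_congr rfl fun z hz => ?_
    by_cases h0 : μo y = 0
    · simp [h0]
    have hpos := (hT y h0).1
    have e : ∀ x ∈ A, (h (y + z) - h z) * (KD0 x y z + ΔDm x y z) * μp x * μo y * μm z
        + h y * ΔDp x y z * μp x * μo y * μm z
        - h y * (KD0 x y z + ΔDp x y z + ΔDm x y z) * μp x * μo y * μm z
        = (Khat x y * μp x) * ((h (y + z) - h y - h z) * Km y z * μo y * μm z / Tp y) := by
      intro x _
      rw [hD]
      simp only [rm]
      ring
    rw [Finset.sum_congr rfl e, ← Finset.sum_mul, ← hTp y]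
    field_simp
  have hSsum : ((1 : ℝ) / 2) * (∑ x ∈ A, ∑ y ∈ A,
        (h (x + y) - h x - h y) * KS0 x y * μo x * μo y)
      - (∑ x ∈ A, ∑ y ∈ A, h x * (ΔSp x y + ΔSm x y) * μo x * μo y)
      + ((1 : ℝ) / 2) * (∑ x ∈ A, ∑ y ∈ A, h (x + y) * ΔSm x y * μo x * μo y)
      + (∑ x ∈ A, ∑ y ∈ A, h x * ΔSp x y * μo x * μo y)
      = ((1 : ℝ) / 2) * (∑ x ∈ A, ∑ y ∈ A,
        (h (x + y) - h x - h y) * Km x y * μo x * μo y) := by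
    have sw : ∑ x ∈ A, ∑ y ∈ A, h x * ΔSm x y * μo x * μo y
        = ∑ x ∈ A, ∑ y ∈ A, h y * ΔSm x y * μo x * μo y := by
      rw [Finset.sum_comm]
      refine Finset.sum_congr rfl fun y _ => Finset.sum_congr rfl fun x _ => ?_
      rw [hsymm x y]; ring
    have sw0 : ((1 : ℝ) / 2) * (∑ x ∈ A, ∑ y ∈ A, h x * ΔSm x y * μo x * μo y)
        - ((1 : ℝ) / 2) * (∑ x ∈ A, ∑ y ∈ A, h y * ΔSm x y * μo x * μo y) = 0 := by
      rw [sw]; ring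
    rw [← add_zero (_ + _), ← sw0, ← sub_eq_zero]
    simp only [Finset.mul_sum, ← Finset.sum_add_distrib, ← Finset.sum_sub_distrib]
    refine Finset.sum_eq_zero fun x _ => Finset.sum_eq_zero fun y _ => ?_
    rw [hS]; ring
  have hcross : ∑ x ∈ A, ∑ y ∈ A, (h (x + y) - h x - h y) * Km x y * μm x * μo y
      = ∑ y ∈ A, ∑ z ∈ A, (h (y + z) - h y - h z) * Km y z * μo y * μm z := by
    rw [Finset.sum_comm]
    refine Finset.sum_congr rfl fun y _ => Finset.sum_congr rfl fun x _ => ?_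
    rw [hKmSymm x y, add_comm x y]; ring
  have hR : ∑ x ∈ A, ∑ y ∈ A,
        (h (x + y) - h x - h y) * Km x y * (μo x + μm x) * (μo y + μm y)
      = (∑ x ∈ A, ∑ y ∈ A, (h (x + y) - h x - h y) * Km x y * μo x * μo y)
      + (∑ x ∈ A, ∑ y ∈ A, (h (x + y) - h x - h y) * Km x y * μo x * μm y)
      + (∑ x ∈ A, ∑ y ∈ A, (h (x + y) - h x - h y) * Km x y * μm x * μo y)
      + (∑ x ∈ A, ∑ y ∈ A, (h (x + y) - h x - h y) * Km x y * μm x * μm y) := by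
    simp only [← Finset.sum_add_distrib]
    refine Finset.sum_congr rfl fun x _ => Finset.sum_congr rfl fun y _ => ?_
    ring
  rw [hR, hcross]
  linarith [hDsum, hSsum]
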